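/- Let K = ℚ(√d) ⊂ ℂ with d = −1 or d = −2, and let w_K = |O_K^×| (so w_K = 4 for d = −1 and w_K = 2 for d = −2). Then every unit u of the ring O_K[1/2] satisfies u^{w_K} = ū^{w_K}, where ū denotes the complex conjugate of u; equivalently, the group homomorphism (O_K[1/2])^× → ℂ^×, u ↦ (u/ū)^{w_K}, is trivial. -/

import Mathlib

noncomputable section

lemma aux_one (k : ℕ) : ∀ a b : ℤ, a ^ 2 + b ^ 2 = 2 ^ k → a * b * (a ^ 2 - b ^ 2) = 0 := by
  induction k with
  | zero =>
    intro a b h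
    have h1 : a ^ 2 ≤ 1 := by nlinarith [sq_nonneg b]
    have ha : a ≤ 1 := by nlinarith
    have ha' : -1 ≤ a := by nlinarith
    interval_cases a
    · have : b = 0 := by nlinarith
      simp [this]
    · simp
    · have : b = 0 := by nlinarith
      simp [this]
  | succ k ih =>
    intro a b h
    have hp : Even (a + b) := by
      have : Even (a ^ 2 + b ^ 2) := by rw [h, pow_succ]; exact even_two.mul_left _
      simpa [Int.even_add, Int.even_pow] using this
    obtain ⟨s, hs⟩ := hp
    obtain rfl : b = s + s - a := by linarith
    have h2 : s ^ 2 + (a - s) ^ 2 = 2 ^ k := by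
      rw [pow_succ 2 k] at h; linarith
    have := ih _ _ h2
    linear_combination 4 * this

lemma aux_two (k : ℕ) : ∀ a b : ℤ, (a ^ 2 + 2 * b ^ 2 = 2 ^ k) → a * b = 0 := by
  induction k with
  | zero =>
    intro a b h
    have hb : b ≤ 0 := by nlinarith [sq_nonneg a]
    have hb' : 0 ≤ b := by nlinarith [sq_nonneg a]
    have : b = 0 := by omega
    simp [this]
  | succ k ih =>
    intro a b h
    have hp : Even a := by
      have : Even (a ^ 2 + 2 * b ^ 2) := by rw [h, pow_succ]; exact even_two.mul_left _
      simpa [Int.even_add, Int.even_pow] using this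
    obtain ⟨s, rfl⟩ := hp
    have h2 : b ^ 2 + 2 * s ^ 2 = 2 ^ k := by
      rw [pow_succ 2 k] at h; linarith
    have := ih _ _ h2
    linear_combination 2 * this

lemma aux_form (d : ℤ) (ω : ℂ) (h : ω ^ 2 = d) (u : ℂ)
    (hu : u ∈ Subring.closure {ω, (2 : ℂ)⁻¹}) :
    ∃ (n : ℕ) (a b : ℤ), 2 ^ n * u = a + b * ω := by
  induction hu using Subring.closure_induction with
  | mem x hx =>
    rcases hx with rfl | hx
    · exact ⟨0, 0, 1, by simp⟩
    · rw [Set.mem_singleton_iff] at hx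
      exact ⟨1, 1, 0, by simp [hx]⟩
  | zero => exact ⟨0, 0, 0, by simp⟩
  | one => exact ⟨0, 1, 0, by simp⟩
  | add x y _ _ hx hy =>
    obtain ⟨n, a, b, h1⟩ := hx
    obtain ⟨m, c, e, h2⟩ := hy
    refine ⟨n + m, 2 ^ m * a + 2 ^ n * c, 2 ^ m * b + 2 ^ n * e, ?_⟩
    push_cast
    rw [pow_add]
    linear_combination 2 ^ m * h1 + 2 ^ n * h2
  | neg x _ hx =>
    obtain ⟨n, a, b, h1⟩ := hx
    refine ⟨n, -a, -b, ?_⟩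
    push_cast
    linear_combination -h1
  | mul x y _ _ hx hy =>
    obtain ⟨n, a, b, h1⟩ := hx
    obtain ⟨m, c, e, h2⟩ := hy
    refine ⟨n + m, a * c + d * b * e, a * e + b * c, ?_⟩
    push_cast
    rw [pow_add]
    linear_combination 2 ^ m * y * h1 + (a + b * ω) * h2 + b * e * h

/-- Let `K = ℚ(√d) ⊂ ℂ` with `d = -1` or `d = -2`, and let `w_K = |O_K^×|` (so `w_K = 4` for
`d = -1` and `w_K = 2` for `d = -2`). Then every unit `u` of the ring `O_K[1/2]` satisfies
`u^{w_K} = conj(u)^{w_K}`. Here `O_K = ℤ[√d]`, so `O_K[1/2]` is the subring of `ℂ` generated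
by `√d` and `1/2`. -/
theorem units_pow_wK_eq_conj_pow_wK (d : ℤ) (hd : d = -1 ∨ d = -2)
    (ω : ℂ) (hω : ω = Complex.I * (Real.sqrt ((-d : ℤ) : ℝ) : ℂ))
    (R : Subring ℂ) (hR : R = Subring.closure {ω, (2 : ℂ)⁻¹})
    (w : ℕ) (hw : w = if d = -1 then 4 else 2) :
    ∀ u : ℂ, u ∈ R → (∃ v ∈ R, u * v = 1) →
      u ^ w = (starRingEnd ℂ) u ^ w := by
  subst hR
  rintro u hu ⟨v, hv, huv⟩
  have hd0 : (0 : ℝ) ≤ ((-d : ℤ) : ℝ) := by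
    rcases hd with rfl | rfl <;> norm_num
  have hω2 : ω ^ 2 = d := by
    rw [hω, mul_pow, Complex.I_sq, ← Complex.ofReal_pow, Real.sq_sqrt hd0]
    push_cast; ring
  have hωc : (starRingEnd ℂ) ω = -ω := by
    rw [hω]; simp
  obtain ⟨n, a, b, h1⟩ := aux_form d ω hω2 u hu
  obtain ⟨m, c, e, h2⟩ := aux_form d ω hω2 v hv
  have h1c := congrArg (starRingEnd ℂ) h1
  have h2c := congrArg (starRingEnd ℂ) h2
  have huvc := congrArg (starRingEnd ℂ) huv
  simp only [map_mul, map_add, map_pow, map_ofNat, map_intCast, hωc, map_one] at h1c h2c huvc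
  have hN : (a ^ 2 - d * b ^ 2) * (c ^ 2 - d * e ^ 2) = (2 : ℤ) ^ (2 * n + 2 * m) := by
    have : (((a ^ 2 - d * b ^ 2) * (c ^ 2 - d * e ^ 2) : ℤ) : ℂ)
        = (((2 : ℤ) ^ (2 * n + 2 * m) : ℤ) : ℂ) := by
      push_cast
      rw [← hω2]
      calc _ = ((a + b * ω) * (a + b * -ω)) * ((c + e * ω) * (c + e * -ω)) := by ring
        _ = 2 ^ (2 * n + 2 * m) * ((u * v) * ((starRingEnd ℂ) u * (starRingEnd ℂ) v)) := by
          rw [← h1, ← h2, ← h1c, ← h2c]; ring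
        _ = _ := by rw [huv, huvc]; ring
    exact_mod_cast this
  have hk : ∃ k : ℕ, a ^ 2 - d * b ^ 2 = 2 ^ k := by
    have hdvd : (a ^ 2 - d * b ^ 2) ∣ (2 : ℤ) ^ (2 * n + 2 * m) := ⟨_, hN.symm⟩
    obtain ⟨k, -, hk⟩ := (dvd_prime_pow Int.prime_two _).1 hdvd
    refine ⟨k, ?_⟩
    have h0 : 0 ≤ a ^ 2 - d * b ^ 2 := by
      rcases hd with rfl | rfl <;> nlinarith [sq_nonneg a, sq_nonneg b]
    rcases Int.associated_iff.1 hk with h | h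
    · exact h
    · have : (0 : ℤ) < 2 ^ k := by positivity
      omega
  obtain ⟨k, hk⟩ := hk
  have h2n : ((2 : ℂ) ^ n) ^ w ≠ 0 := pow_ne_zero _ (pow_ne_zero _ two_ne_zero)
  apply mul_left_cancel₀ h2n
  rw [← mul_pow, ← mul_pow, h1, h1c]
  rcases hd with rfl | rfl
  · have := aux_one k a b (by linarith)
    have hz : (a : ℂ) * b * (a ^ 2 - b ^ 2) = 0 := by exact_mod_cast this
    simp only [if_true] at hw
    subst hw
    push_cast at hω2
    linear_combination 8 * ω * hz + 8 * a * b ^ 3 * ω * hω2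
  · have := aux_two k a b (by linarith)
    have hz : (a : ℂ) * b = 0 := by exact_mod_cast this
    norm_num at hw
    subst hw
    linear_combination 4 * ω * hz
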